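/- For every M > 0 there exists a constant c > 0 such that for every real t ∈ [0,2π] and every eigenfunction Ψ of L_t with ‖Ψ‖ = 1 whose eigenvalue λ satisfies |λ| ≤ M, one has |Ψ(x)| ≤ c for all x ∈ [0,1]. (This is the content of Lemma 2: for |k| < N(h) the normalized eigenfunctions Ψ_{k,t} of L_t are uniformly bounded on [0,1], uniformly in t in a punctured neighborhood of any singular quasimomentum t_j.) -/

import Mathlib

open MeasureTheory Filter Finset Complex

noncomputable section

namespace SpectralExp

/-- inner product on ℂ^m, linear in the first argument. -/
def ipV {m : ℕ} (u v : Fin m → ℂ) : ℂ := ∑ i, u i * (starRingEnd ℂ) (v i)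

/-- euclidean norm on ℂ^m -/
def vnorm {m : ℕ} (v : Fin m → ℂ) : ℝ := Real.sqrt (∑ i, ‖v i‖ ^ 2)

/-- L² inner product over [a,b], (f,g) = ∫ ⟨f(x),g(x)⟩ dx -/
def L2ipOn {m : ℕ} (a b : ℝ) (f g : ℝ → Fin m → ℂ) : ℂ := ∫ x in a..b, ipV (f x) (g x)

def L2ip {m : ℕ} (f g : ℝ → Fin m → ℂ) : ℂ := L2ipOn 0 1 f g

def L2normOn {m : ℕ} (a b : ℝ) (f : ℝ → Fin m → ℂ) : ℝ :=
  Real.sqrt (∫ x in a..b, ∑ i, ‖f x i‖ ^ 2)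

def L2norm {m : ℕ} (f : ℝ → Fin m → ℂ) : ℝ := L2normOn 0 1 f

/-- convergence of a sequence of functions in the L²(a,b) norm -/
def L2TendstoOn {m : ℕ} (a b : ℝ) (F : ℕ → ℝ → Fin m → ℂ) (g : ℝ → Fin m → ℂ) : Prop :=
  Tendsto (fun s => L2normOn a b (fun x => F s x - g x)) atTop (nhds 0)

/-- z·(P₂ y^{(n−2)} + … + P_n y)(x) -/
def pertExpr (n m : ℕ) (P : ℕ → ℝ → Matrix (Fin m) (Fin m) ℂ) (z : ℝ)
    (y : ℝ → Fin m → ℂ) (x : ℝ) : Fin m → ℂ :=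
  (z : ℂ) • ∑ ν ∈ Finset.Icc 2 n, (P ν x).mulVec (iteratedDeriv (n - ν) y x)

/-- `y` belongs to the domain of L_{t,z} (boundary conditions, y^{(n-1)} absolutely
continuous on [0,1]) and L_{t,z} y = Ly almost everywhere on [0,1]. -/
def InDomRel (n m : ℕ) (P : ℕ → ℝ → Matrix (Fin m) (Fin m) ℂ) (t : ℂ) (z : ℝ)
    (y Ly : ℝ → Fin m → ℂ) : Prop :=
  ContDiff ℝ (↑(n - 1)) y ∧
  (∀ ν < n, iteratedDeriv ν y 1 = Complex.exp (Complex.I * t) • iteratedDeriv ν y 0) ∧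
  ∃ g : ℝ → Fin m → ℂ, IntegrableOn g (Set.Icc 0 1) ∧
    (∀ x ∈ Set.Icc (0:ℝ) 1,
      iteratedDeriv (n - 1) y x = iteratedDeriv (n - 1) y 0 + ∫ s in (0:ℝ)..x, g s) ∧
    (∀ᵐ x ∂(volume.restrict (Set.Icc (0:ℝ) 1)), Ly x = g x + pertExpr n m P z y x)

/-- λ is an eigenvalue of L_{t,z} with eigenfunction Ψ -/
def IsEigenpair (n m : ℕ) (P : ℕ → ℝ → Matrix (Fin m) (Fin m) ℂ) (t : ℂ) (z : ℝ)
    (lam : ℂ) (Ψ : ℝ → Fin m → ℂ) : Prop :=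
  (∃ x ∈ Set.Icc (0:ℝ) 1, Ψ x ≠ 0) ∧ InDomRel n m P t z Ψ (fun x => lam • Ψ x)

def IsEigenvalue (n m : ℕ) (P : ℕ → ℝ → Matrix (Fin m) (Fin m) ℂ) (t : ℂ) (z : ℝ)
    (lam : ℂ) : Prop := ∃ Ψ, IsEigenpair n m P t z lam Ψ

/-- y₀ belongs to the root subspace of L_{t,z} at λ -/
def InRootSpace (n m : ℕ) (P : ℕ → ℝ → Matrix (Fin m) (Fin m) ℂ) (t : ℂ) (z : ℝ)
    (lam : ℂ) (y₀ : ℝ → Fin m → ℂ) : Prop :=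
  ∃ p : ℕ, ∃ y : ℕ → ℝ → Fin m → ℂ, y 0 = y₀ ∧ y p = 0 ∧
    ∀ i < p, InDomRel n m P t z (y i) (fun x => lam • y i x + y (i + 1) x)

/-- algebraic multiplicity of λ as an eigenvalue of L_{t,z}: the dimension of the root
subspace, as the supremum of cardinalities of linearly independent families of root functions -/
def algMult (n m : ℕ) (P : ℕ → ℝ → Matrix (Fin m) (Fin m) ℂ) (t : ℂ) (z : ℝ)
    (lam : ℂ) : ℕ :=
  sSup {d : ℕ | ∃ y : Fin d → ℝ → Fin m → ℂ,
    LinearIndependent ℂ y ∧ ∀ i, InRootSpace n m P t z lam (y i)}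

/-- the standing conditions on the coefficients: periodicity and p^{(n-ν)} ∈ L²[0,1] -/
def CoeffCond (n m : ℕ) (P : ℕ → ℝ → Matrix (Fin m) (Fin m) ℂ) : Prop :=
  ∀ ν, 2 ≤ ν → ν ≤ n →
    (∀ x, P ν (x + 1) = P ν x) ∧
    (∀ i j k, k < n - ν → Differentiable ℝ (iteratedDeriv k fun x => P ν x i j)) ∧
    (∀ i j, MemLp (iteratedDeriv (n - ν) fun x => P ν x i j) 2
      (volume.restrict (Set.Icc (0:ℝ) 1)))

/-- the eigenvalues of an m×m matrix are all simple (m distinct roots of the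
characteristic polynomial) -/
def SimpleSpectrum (m : ℕ) (C : Matrix (Fin m) (Fin m) ℂ) : Prop :=
  ∃ μ : Fin m → ℂ, Function.Injective μ ∧ ∀ j, (C - μ j • 1).det = 0

/-- integral over the upper semicircle {|t-c| = r, Im t > 0}, traversed from c-r to c+r -/
def arcUpper (m : ℕ) (c r : ℝ) (F : ℂ → Fin m → ℂ) : Fin m → ℂ :=
  ∫ s in (0:ℝ)..Real.pi,
    (-(Complex.I) * (r:ℂ) * Complex.exp ((↑(Real.pi - s)) * Complex.I)) •
      F ((c : ℂ) + (r : ℂ) * Complex.exp ((↑(Real.pi - s)) * Complex.I))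

/-- integral over the lower semicircle {|t-c| = r, Im t < 0}, traversed from c-r to c+r -/
def arcLower (m : ℕ) (c r : ℝ) (F : ℂ → Fin m → ℂ) : Fin m → ℂ :=
  ∫ s in (0:ℝ)..Real.pi,
    (Complex.I * (r:ℂ) * Complex.exp ((↑(Real.pi + s)) * Complex.I)) •
      F ((c : ℂ) + (r : ℂ) * Complex.exp ((↑(Real.pi + s)) * Complex.I))

/-- the real part r(h,ε) of the curve l₊(h,ε) -/
def rSet (h ε : ℝ) {v : ℕ} (ts : Fin v → ℝ) : Set ℝ :=
  (Set.Icc h (Real.pi - h) ∪ Set.Icc (Real.pi + h) (2 * Real.pi - h)) \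
    ⋃ j, Set.Ioo (ts j - ε) (ts j + ε)

/-- the open set D₊(h,ε) enclosed by l₊(h,ε) and [-h,2π-h] -/
def Dplus (h ε : ℝ) {v : ℕ} (ts : Fin v → ℝ) : Set ℂ :=
  {t | 0 < t.im ∧ (‖t‖ < h ∨ ‖t - Real.pi‖ < h ∨
    ∃ j, ‖t - ts j‖ < ε)}

def Dminus (h ε : ℝ) {v : ℕ} (ts : Fin v → ℝ) : Set ℂ :=
  {t | (starRingEnd ℂ) t ∈ Dplus h ε ts}

/-- the Gelfand transform f_t(x) = Σ_{k∈ℤ} f(x+k) e^{-ikt} -/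
def gelfand (m : ℕ) (f : ℝ → Fin m → ℂ) (t : ℂ) (x : ℝ) : Fin m → ℂ :=
  ∑' k : ℤ, Complex.exp (-(k : ℂ) * Complex.I * t) • f (x + (k : ℝ))

/-- membership of the decomposition f = f⁺ + f⁻ in the class W -/
structure InW (m : ℕ) (h ε : ℝ) {v : ℕ} (ts : Fin v → ℝ) (f fp fm : ℝ → Fin m → ℂ) : Prop where
  decomp : ∀ x, f x = fp x + fm x
  mem_f : MemLp f 2 volume
  mem_fp : MemLp fp 2 volume
  mem_fm : MemLp fm 2 volume
  cont_fp : ContinuousOn (fun q : ℝ × ℂ => gelfand m fp q.2 q.1)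
    (Set.Icc 0 1 ×ˢ (closure (Dplus h ε ts) ∪ (Complex.ofReal '' Set.Icc (-h) (2 * Real.pi - h))))
  cont_fm : ContinuousOn (fun q : ℝ × ℂ => gelfand m fm q.2 q.1)
    (Set.Icc 0 1 ×ˢ (closure (Dminus h ε ts) ∪ (Complex.ofReal '' Set.Icc (-h) (2 * Real.pi - h))))
  anal_fp : ∀ᵐ x ∂(volume.restrict (Set.Icc (0:ℝ) 1)),
    DifferentiableOn ℂ (fun t => gelfand m fp t x) (Dplus h ε ts)
  anal_fm : ∀ᵐ x ∂(volume.restrict (Set.Icc (0:ℝ) 1)),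
    DifferentiableOn ℂ (fun t => gelfand m fm t x) (Dminus h ε ts)

/-- the set of indices k ∈ ℤ with N ≤ |k| ≤ s -/
def bigIdx (N s : ℕ) : Finset ℤ :=
  (Finset.Icc (-(s : ℤ)) (s : ℤ)).filter fun k => (N : ℤ) ≤ |k|


/-- ((2πk + c)·i)^n -/
def freqPow (c : ℝ) (k : ℤ) (n : ℕ) : ℂ :=
  (((2 * Real.pi * (k : ℝ) + c : ℝ) : ℂ) * Complex.I) ^ n

end SpectralExp

open SpectralExp

/-!
Let `y` solve `l(y) = λ y` on `[0, 1]`, and let `u` be its primitive vanishing at `0`, so that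
`sup ‖u‖ ≤ ‖y‖_{L¹} ≤ ‖y‖_{L²}`. Since `l` has no term of order `n - 1`, integrating the
equation bounds the oscillation of `u⁽ⁿ⁾ = y⁽ⁿ⁻¹⁾`, and hence `sup ‖u⁽ⁿ⁾‖`, by a constant times
`∑_{k < n} sup ‖u⁽ᵏ⁾‖`; the constant depends only on `M` and on the `L¹` norms of the
coefficients. Landau's inequality
`sup ‖f'‖ ≤ (2 / h) sup ‖f‖ + h sup ‖f''‖` gives, by induction on the order,
`sup ‖u⁽ᵏ⁾‖ ≤ ε sup ‖u⁽ⁿ⁾‖ + C sup ‖u‖` for `k < n`. For small `ε` the top derivative is absorbed,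
which leaves all `sup ‖u⁽ᵏ⁾‖`, in particular `sup ‖y‖ = sup ‖u'‖`, bounded by a multiple of
`sup ‖u‖`.
-/

namespace SpectralExp

section SupNorm

variable {E : Type*} [NormedAddCommGroup E] {a b : ℝ}

/-- The supremum norm of a function over `[a, b]`; it has the junk value `0` if the function is
unbounded there. -/
def supNormOn (a b : ℝ) (f : ℝ → E) : ℝ := ⨆ x : Set.Icc a b, ‖f x‖

lemma supNormOn_nonneg (f : ℝ → E) : 0 ≤ supNormOn a b f :=
  Real.iSup_nonneg fun _ => norm_nonneg _

lemma norm_le_supNormOn {f : ℝ → E} (hf : ContinuousOn f (Set.Icc a b)) {x : ℝ}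
    (hx : x ∈ Set.Icc a b) : ‖f x‖ ≤ supNormOn a b f := by
  have hbdd : BddAbove (Set.range fun x : Set.Icc a b => ‖f x‖) :=
    Set.image_eq_range (fun x => ‖f x‖) _ ▸ (isCompact_Icc.image_of_continuousOn hf.norm).bddAbove
  exact le_ciSup hbdd ⟨x, hx⟩

lemma supNormOn_le (hab : a ≤ b) {f : ℝ → E} {C : ℝ} (hf : ∀ x ∈ Set.Icc a b, ‖f x‖ ≤ C) :
    supNormOn a b f ≤ C :=
  haveI : Nonempty (Set.Icc a b) := Set.nonempty_Icc_subtype hab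
  ciSup_le fun x => hf x x.2

end SupNorm

section Interpolation

variable {E : Type*} [NormedAddCommGroup E] [NormedSpace ℝ E] {a b : ℝ}

lemma norm_sub_sub_smul_deriv_le {f : ℝ → E} {x z R : ℝ}
    (hf : ∀ u ∈ Set.uIcc x z, DifferentiableAt ℝ f u)
    (hR : ∀ u ∈ Set.uIcc x z, ‖deriv f u - deriv f x‖ ≤ R) :
    ‖f z - f x - (z - x) • deriv f x‖ ≤ R * |z - x| := by
  have hderiv : ∀ u ∈ Set.uIcc x z, HasDerivWithinAt (fun u => f u - (u - x) • deriv f x)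
      (deriv f u - deriv f x) (Set.uIcc x z) u := fun u hu => by
    simpa using ((hf u hu).hasDerivAt.fun_sub
      (((hasDerivAt_id u).sub_const x).smul_const (deriv f x))).hasDerivWithinAt
  simpa [sub_right_comm] using (convex_uIcc x z).norm_image_sub_le_of_norm_hasDerivWithin_le
    hderiv hR Set.left_mem_uIcc Set.right_mem_uIcc

lemma abs_sub_mul_norm_deriv_le {f : ℝ → E} {x z R : ℝ}
    (hf : ∀ u ∈ Set.uIcc x z, DifferentiableAt ℝ f u)
    (hR : ∀ u ∈ Set.uIcc x z, ‖deriv f u - deriv f x‖ ≤ R) :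
    |z - x| * ‖deriv f x‖ ≤ ‖f x‖ + ‖f z‖ + R * |z - x| :=
  calc |z - x| * ‖deriv f x‖
      = ‖f z - f x - (f z - f x - (z - x) • deriv f x)‖ := by
        rw [sub_sub_cancel, norm_smul, Real.norm_eq_abs]
    _ ≤ ‖f z‖ + ‖f x‖ + ‖f z - f x - (z - x) • deriv f x‖ :=
        norm_sub_le_of_le (norm_sub_le _ _) le_rfl
    _ ≤ ‖f x‖ + ‖f z‖ + R * |z - x| := by
        linarith [norm_sub_sub_smul_deriv_le hf hR]

lemma supNormOn_deriv_le_of_oscillation_le (hab : a < b) {f : ℝ → E} {R : ℝ}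
    (hf : Differentiable ℝ f) (hR : ∀ x ∈ Set.Icc a b, ‖deriv f x - deriv f a‖ ≤ R) :
    supNormOn a b (deriv f) ≤ 2 / (b - a) * supNormOn a b f + 2 * R := by
  have hba : 0 < b - a := sub_pos.mpr hab
  have hfS : ∀ x ∈ Set.Icc a b, ‖f x‖ ≤ supNormOn a b f := fun x =>
    norm_le_supNormOn hf.continuous.continuousOn
  have hleft : (b - a) * ‖deriv f a‖ ≤ ‖f a‖ + ‖f b‖ + R * (b - a) := by
    have h := abs_sub_mul_norm_deriv_le (x := a) (z := b) (fun u _ => hf u)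
      (by rwa [Set.uIcc_of_le hab.le])
    rwa [abs_of_pos hba] at h
  have hderiv_left : ‖deriv f a‖ ≤ 2 / (b - a) * supNormOn a b f + R := by
    rw [div_mul_eq_mul_div, div_add' _ _ _ hba.ne', le_div_iff₀' hba]
    linarith [hfS a (Set.left_mem_Icc.mpr hab.le), hfS b (Set.right_mem_Icc.mpr hab.le)]
  refine supNormOn_le hab.le fun x hx => ?_
  linarith [norm_le_norm_add_norm_sub' (deriv f x) (deriv f a), hR x hx]

lemma supNormOn_deriv_le_of_contDiff_two {f : ℝ → E} {h : ℝ} (hh : 0 < h)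
    (hhab : h ≤ (b - a) / 2) (hf : ContDiff ℝ 2 f) :
    supNormOn a b (deriv f) ≤
      2 / h * supNormOn a b f + h * supNormOn a b (deriv (deriv f)) := by
  have hf' : ContDiff ℝ 1 (deriv f) :=
    (contDiff_succ_iff_deriv (n := 1).mp (by rwa [one_add_one_eq_two])).2.2
  have hfS : ∀ x ∈ Set.Icc a b, ‖f x‖ ≤ supNormOn a b f := fun x =>
    norm_le_supNormOn hf.continuous.continuousOn
  refine supNormOn_le (by linarith) fun x hx => ?_
  obtain ⟨z, hz, hzx⟩ : ∃ z ∈ Set.Icc a b, |z - x| = h := by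
    rcases le_total x ((a + b) / 2) with hmid | hmid
    · exact ⟨x + h, ⟨by linarith [hx.1], by linarith⟩, by simp [abs_of_pos hh]⟩
    · exact ⟨x - h, ⟨by linarith, by linarith [hx.2]⟩, by simp [abs_of_pos hh]⟩
  have hseg : Set.uIcc x z ⊆ Set.Icc a b := Set.uIcc_subset_Icc hx hz
  have hosc : ∀ u ∈ Set.uIcc x z,
      ‖deriv f u - deriv f x‖ ≤ supNormOn a b (deriv (deriv f)) * h := fun u hu =>
    calc ‖deriv f u - deriv f x‖
        ≤ supNormOn a b (deriv (deriv f)) * ‖u - x‖ :=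
          (convex_uIcc x z).norm_image_sub_le_of_norm_deriv_le
            (fun v _ => hf'.differentiable_one v)
            (fun v hv => norm_le_supNormOn hf'.continuous_deriv_one.continuousOn (hseg hv))
            Set.left_mem_uIcc hu
      _ ≤ supNormOn a b (deriv (deriv f)) * h :=
          mul_le_mul_of_nonneg_left (hzx ▸ Set.abs_sub_left_of_mem_uIcc hu) (supNormOn_nonneg _)
  have hstep := abs_sub_mul_norm_deriv_le (fun u _ => hf.differentiable two_ne_zero u) hosc
  rw [hzx] at hstep
  refine le_of_mul_le_mul_left ?_ hh
  calc h * ‖deriv f x‖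
      ≤ 2 * supNormOn a b f + supNormOn a b (deriv (deriv f)) * h * h := by
        linarith [hfS x hx, hfS z hz]
    _ = h * (2 / h * supNormOn a b f + h * supNormOn a b (deriv (deriv f))) := by
        field_simp

lemma exists_supNormOn_iteratedDeriv_le_succ (hab : a < b) (k : ℕ) :
    ∀ ε : ℝ, 0 < ε → ∃ C : ℝ, 0 ≤ C ∧ ∀ u : ℝ → E, ContDiff ℝ (k + 1 : ℕ) u →
      supNormOn a b (iteratedDeriv k u) ≤
        ε * supNormOn a b (iteratedDeriv (k + 1) u) + C * supNormOn a b u := by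
  induction k with
  | zero =>
    refine fun ε hε => ⟨1, zero_le_one, fun u _ => ?_⟩
    rw [iteratedDeriv_zero, one_mul]
    exact le_add_of_nonneg_left (mul_nonneg hε.le (supNormOn_nonneg _))
  | succ k ih =>
    intro ε hε
    set h := min ε (b - a) / 2
    have _ : 0 < b - a := sub_pos.mpr hab
    have hh : 0 < h := by positivity
    obtain ⟨C, hC, hCu⟩ := ih (h / 4) (by positivity)
    refine ⟨4 / h * C, by positivity, fun u hu => ?_⟩
    have hprev := hCu u (hu.of_le (by exact_mod_cast Nat.le_succ _))
    have hderiv_k : ContDiff ℝ 2 (iteratedDeriv k u) := by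
      rw [add_assoc, one_add_one_eq_two, add_comm, Nat.cast_add, Nat.cast_ofNat] at hu
      rw [iteratedDeriv_eq_iterate]
      exact ContDiff.iterate_deriv' 2 k hu
    have hlandau := supNormOn_deriv_le_of_contDiff_two hh
      (div_le_div_of_nonneg_right (min_le_right ε (b - a)) zero_le_two) hderiv_k
    rw [← iteratedDeriv_succ, ← iteratedDeriv_succ] at hlandau
    have habsorb : 2 / h * supNormOn a b (iteratedDeriv k u) ≤
        supNormOn a b (iteratedDeriv (k + 1) u) / 2 + 4 / h * C / 2 * supNormOn a b u :=
      calc 2 / h * supNormOn a b (iteratedDeriv k u)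
          ≤ 2 / h * (h / 4 * supNormOn a b (iteratedDeriv (k + 1) u) + C * supNormOn a b u) := by
            gcongr
        _ = _ := by field_simp; ring
    have hhε : h * supNormOn a b (iteratedDeriv (k + 2) u) ≤
        ε / 2 * supNormOn a b (iteratedDeriv (k + 2) u) :=
      mul_le_mul_of_nonneg_right (div_le_div_of_nonneg_right (min_le_left _ _) zero_le_two)
        (supNormOn_nonneg _)
    linarith

theorem exists_supNormOn_iteratedDeriv_le (hab : a < b) (K : ℕ) :
    ∀ ε : ℝ, 0 < ε → ∃ C : ℝ, 0 ≤ C ∧ ∀ u : ℝ → E, ContDiff ℝ K u → ∀ k < K,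
      supNormOn a b (iteratedDeriv k u) ≤
        ε * supNormOn a b (iteratedDeriv K u) + C * supNormOn a b u := by
  induction K with
  | zero => exact fun _ _ => ⟨0, le_rfl, fun _ _ _ hk => absurd hk (Nat.not_lt_zero _)⟩
  | succ K ih =>
    intro ε hε
    obtain ⟨C₁, hC₁, hlower⟩ := ih 1 one_pos
    obtain ⟨C₂, hC₂, htop⟩ := exists_supNormOn_iteratedDeriv_le_succ (E := E) hab K ε hε
    refine ⟨C₁ + C₂, add_nonneg hC₁ hC₂, fun u hu k hk => ?_⟩
    have hu0 : 0 ≤ supNormOn a b u := supNormOn_nonneg u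
    have htop_u := htop u hu
    rcases Nat.lt_succ_iff_lt_or_eq.mp hk with hlt | rfl
    · linarith [hlower u (hu.of_le (by exact_mod_cast Nat.le_succ _)) k hlt]
    · linarith [mul_nonneg hC₁ hu0]

theorem exists_supNormOn_iteratedDeriv_le_of_le_sum (hab : a < b) (K : ℕ) {B : ℝ} (hB : 0 < B) :
    ∃ C : ℝ, 0 < C ∧ ∀ u : ℝ → E, ContDiff ℝ K u →
      supNormOn a b (iteratedDeriv K u) ≤
        B * ∑ k ∈ range K, supNormOn a b (iteratedDeriv k u) →
      ∀ k ≤ K, supNormOn a b (iteratedDeriv k u) ≤ C * supNormOn a b u := by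
  obtain ⟨C, hC, hinterp⟩ := exists_supNormOn_iteratedDeriv_le (E := E) hab K
    (1 / (2 * B * (K + 1))) (by positivity)
  set ε := 1 / (2 * B * (K + 1)) with hε
  set D := 2 * B * K * C
  refine ⟨D + (ε * D + C) + 1, by positivity, fun u hu htop k hk => ?_⟩
  set S := fun k => supNormOn a b (iteratedDeriv k u)
  have hu0 : 0 ≤ supNormOn a b u := supNormOn_nonneg u
  have hinterp_u : ∀ k < K, S k ≤ ε * S K + C * supNormOn a b u := hinterp u hu
  have hhalf : B * K * ε ≤ 1 / 2 := by
    rw [hε, mul_one_div, div_le_div_iff₀ (by positivity) two_pos]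
    nlinarith
  have hsum : ∑ k ∈ range K, S k ≤ K * (ε * S K + C * supNormOn a b u) := by
    simpa only [card_range, nsmul_eq_mul] using sum_le_card_nsmul (range K) S _
      fun k hk => hinterp_u k (mem_range.mp hk)
  have hS_top : S K ≤ D * supNormOn a b u := by
    have habsorb : S K ≤ 1 / 2 * S K + B * K * C * supNormOn a b u :=
      calc S K ≤ B * (K * (ε * S K + C * supNormOn a b u)) := htop.trans (by gcongr)
        _ = B * K * ε * S K + B * K * C * supNormOn a b u := by ring
        _ ≤ _ := by gcongr; exact supNormOn_nonneg _
    linarith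
  have hε0 : 0 ≤ ε := by positivity
  have hD0 : 0 ≤ D := by positivity
  rcases hk.lt_or_eq with hlt | rfl
  · linarith [hinterp_u k hlt, mul_le_mul_of_nonneg_left hS_top hε0, mul_nonneg hD0 hu0]
  · linarith [mul_nonneg (add_nonneg (mul_nonneg hε0 hD0) hC) hu0]

end Interpolation

section IntegralEquation

variable {E : Type*} [NormedAddCommGroup E] [NormedSpace ℝ E] {a b : ℝ}

lemma deriv_primitive [CompleteSpace E] {y : ℝ → E} (hy : Continuous y) :
    deriv (fun x => ∫ s in a..x, y s) = y :=
  funext fun x => hy.deriv_integral y a x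

lemma contDiff_primitive [CompleteSpace E] {y : ℝ → E} {N : ℕ} (hy : ContDiff ℝ N y) :
    ContDiff ℝ (N + 1 : ℕ) fun x => ∫ s in a..x, y s := by
  rw [Nat.cast_succ, contDiff_succ_iff_deriv, deriv_primitive hy.continuous]
  exact ⟨fun x => (hy.continuous.integral_hasStrictDerivAt a x).hasDerivAt.differentiableAt,
    by simp, hy⟩

lemma supNormOn_primitive_le (hab : a ≤ b) {y : ℝ → E} (hy : Continuous y) :
    supNormOn a b (fun x => ∫ s in a..x, y s) ≤ ∫ s in a..b, ‖y s‖ :=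
  supNormOn_le hab fun x hx =>
    calc ‖∫ s in a..x, y s‖ ≤ ∫ s in a..x, ‖y s‖ :=
          intervalIntegral.norm_integral_le_integral_norm hx.1
      _ ≤ ∫ s in a..b, ‖y s‖ :=
          intervalIntegral.integral_mono_interval le_rfl hx.1 hx.2
            (.of_forall fun _ => norm_nonneg _) (hy.norm.intervalIntegrable _ _)

lemma norm_integral_le_integral_of_norm_le {g : ℝ → E} {v : ℝ → ℝ}
    (hv : IntegrableOn v (Set.Icc a b))
    (hgv : ∀ᵐ x ∂volume.restrict (Set.Icc a b), ‖g x‖ ≤ v x) {x : ℝ} (hx : x ∈ Set.Icc a b) :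
    ‖∫ s in a..x, g s‖ ≤ ∫ s in a..b, v s := by
  have hab : a ≤ b := hx.1.trans hx.2
  have hgv_Ioc : ∀ᵐ s ∂volume.restrict (Set.Ioc a b), ‖g s‖ ≤ v s :=
    ae_restrict_of_ae_restrict_of_subset Set.Ioc_subset_Icc_self hgv
  have hv_ab : IntervalIntegrable v volume a b :=
    (intervalIntegrable_iff_integrableOn_Icc_of_le hab).mpr hv
  calc ‖∫ s in a..x, g s‖ ≤ ∫ s in a..x, v s := by
        refine intervalIntegral.norm_integral_le_of_norm_le hx.1 ?_ (hv_ab.mono_set ?_)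
        · rw [← ae_restrict_iff' measurableSet_Ioc]
          exact ae_restrict_of_ae_restrict_of_subset (Set.Ioc_subset_Ioc_right hx.2) hgv_Ioc
        · exact Set.uIcc_subset_uIcc_left (Set.mem_uIcc_of_le hx.1 hx.2)
    _ ≤ ∫ s in a..b, v s :=
        intervalIntegral.integral_mono_interval le_rfl hx.1 hx.2
          (hgv_Ioc.mono fun s hs => (norm_nonneg (g s)).trans hs) hv_ab

lemma supNormOn_iteratedDeriv_le_of_integral_eq (hab : a < b) {N : ℕ} {w : ℝ → ℝ}
    (hw : IntegrableOn w (Set.Icc a b)) {u g : ℝ → E} (hu : ContDiff ℝ (N + 1 : ℕ) u)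
    (hint : ∀ x ∈ Set.Icc a b,
      iteratedDeriv (N + 1) u x = iteratedDeriv (N + 1) u a + ∫ s in a..x, g s)
    (hg : ∀ᵐ x ∂volume.restrict (Set.Icc a b),
      ‖g x‖ ≤ w x * ∑ k ∈ range (N + 1), ‖iteratedDeriv k u x‖) :
    supNormOn a b (iteratedDeriv (N + 1) u) ≤
      (2 / (b - a) + 2 * ∫ x in a..b, |w x|) *
        ∑ k ∈ range (N + 1), supNormOn a b (iteratedDeriv k u) := by
  set T := ∑ k ∈ range (N + 1), supNormOn a b (iteratedDeriv k u)
  have hsum : ∀ x ∈ Set.Icc a b, ∑ k ∈ range (N + 1), ‖iteratedDeriv k u x‖ ≤ T := fun x hx =>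
    sum_le_sum fun k hk => norm_le_supNormOn
      (hu.continuous_iteratedDeriv k (by exact_mod_cast (mem_range.mp hk).le)).continuousOn hx
  have hNT : supNormOn a b (iteratedDeriv N u) ≤ T :=
    single_le_sum (f := fun k => supNormOn a b (iteratedDeriv k u))
      (fun k _ => supNormOn_nonneg _) (self_mem_range_succ N)
  have hgT : ∀ᵐ x ∂volume.restrict (Set.Icc a b), ‖g x‖ ≤ |w x| * T := by
    filter_upwards [hg, ae_restrict_mem measurableSet_Icc] with x hgx hx
    exact hgx.trans (mul_le_mul (le_abs_self _) (hsum x hx) (by positivity) (abs_nonneg _))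
  have hosc : ∀ x ∈ Set.Icc a b, ‖iteratedDeriv (N + 1) u x - iteratedDeriv (N + 1) u a‖ ≤
      (∫ s in a..b, |w s|) * T := fun x hx => by
    rw [hint x hx, add_sub_cancel_left, ← intervalIntegral.integral_mul_const]
    exact norm_integral_le_integral_of_norm_le (hw.abs.mul_const T) hgT hx
  have _ : 0 < b - a := sub_pos.mpr hab
  rw [iteratedDeriv_succ] at hosc ⊢
  calc supNormOn a b (deriv (iteratedDeriv N u))
      ≤ 2 / (b - a) * supNormOn a b (iteratedDeriv N u) + 2 * ((∫ s in a..b, |w s|) * T) :=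
        supNormOn_deriv_le_of_oscillation_le hab
          (hu.differentiable_iteratedDeriv N (by exact_mod_cast N.lt_succ_self)) hosc
    _ ≤ 2 / (b - a) * T + 2 * ((∫ s in a..b, |w s|) * T) := by gcongr
    _ = (2 / (b - a) + 2 * ∫ x in a..b, |w x|) * T := by ring

/-- Interpolation is applied to a primitive of `y`, whose supremum norm is at most the `L¹` norm
of `y`. -/
theorem exists_norm_le_mul_integral_norm [CompleteSpace E] (hab : a < b) (N : ℕ) {w : ℝ → ℝ}
    (hw : IntegrableOn w (Set.Icc a b)) :
    ∃ C : ℝ, 0 < C ∧ ∀ y g : ℝ → E, ContDiff ℝ N y →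
      (∀ x ∈ Set.Icc a b, iteratedDeriv N y x = iteratedDeriv N y a + ∫ s in a..x, g s) →
      (∀ᵐ x ∂volume.restrict (Set.Icc a b),
        ‖g x‖ ≤ w x * ∑ k ∈ range N, ‖iteratedDeriv k y x‖) →
      ∀ x ∈ Set.Icc a b, ‖y x‖ ≤ C * ∫ s in a..b, ‖y s‖ := by
  have _ : 0 < b - a := sub_pos.mpr hab
  have hw_int : 0 ≤ ∫ x in a..b, |w x| :=
    intervalIntegral.integral_nonneg hab.le fun x _ => abs_nonneg _
  obtain ⟨C, hC, hinterp⟩ := exists_supNormOn_iteratedDeriv_le_of_le_sum (E := E) hab (N + 1)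
    (B := 2 / (b - a) + 2 * ∫ x in a..b, |w x|) (by positivity)
  refine ⟨C, hC, fun y g hy hint hg x hx => ?_⟩
  set u : ℝ → E := fun x => ∫ s in a..x, y s
  have hu : ContDiff ℝ (N + 1 : ℕ) u := contDiff_primitive hy
  have hu_deriv : ∀ k, iteratedDeriv (k + 1) u = iteratedDeriv k y := fun k => by
    rw [iteratedDeriv_succ', deriv_primitive hy.continuous]
  have hgu : ∀ᵐ x ∂volume.restrict (Set.Icc a b),
      ‖g x‖ ≤ |w x| * ∑ k ∈ range (N + 1), ‖iteratedDeriv k u x‖ := by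
    filter_upwards [hg] with x hgx
    simp only [sum_range_succ', hu_deriv]
    refine hgx.trans (mul_le_mul (le_abs_self _) ?_ (by positivity) (abs_nonneg _))
    exact le_add_of_nonneg_right (norm_nonneg _)
  have htop := supNormOn_iteratedDeriv_le_of_integral_eq hab hw.abs hu
    (by simpa only [hu_deriv] using hint) hgu
  simp only [abs_abs] at htop
  calc ‖y x‖ ≤ supNormOn a b (iteratedDeriv 1 u) := by
        rw [hu_deriv 0, iteratedDeriv_zero]
        exact norm_le_supNormOn hy.continuous.continuousOn hx
    _ ≤ C * supNormOn a b u := hinterp u hu htop 1 (Nat.le_add_left 1 N)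
    _ ≤ C * ∫ s in a..b, ‖y s‖ := by
        gcongr
        exact supNormOn_primitive_le hab.le hy.continuous

end IntegralEquation

section Norms

variable {m : ℕ}

lemma vnorm_le_sqrt_mul_norm (v : Fin m → ℂ) : vnorm v ≤ √m * ‖v‖ := by
  rw [vnorm, ← Real.sqrt_sq (norm_nonneg v), ← Real.sqrt_mul (Nat.cast_nonneg m)]
  refine Real.sqrt_le_sqrt ?_
  simpa using sum_le_card_nsmul univ (fun i => ‖v i‖ ^ 2) (‖v‖ ^ 2)
    fun i _ => pow_le_pow_left₀ (norm_nonneg _) (norm_le_pi_norm v i) 2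

lemma norm_sq_le_sum_norm_sq {ι E : Type*} [Fintype ι] [SeminormedAddCommGroup E] (v : ι → E) :
    ‖v‖ ^ 2 ≤ ∑ i, ‖v i‖ ^ 2 :=
  (Real.le_sqrt (norm_nonneg v) (by positivity)).mp <|
    (pi_norm_le_iff_of_nonneg (Real.sqrt_nonneg _)).mpr fun i => Real.le_sqrt_of_sq_le <|
      single_le_sum (f := fun i => ‖v i‖ ^ 2) (fun _ _ => by positivity) (mem_univ i)

lemma integral_norm_le_L2norm {y : ℝ → Fin m → ℂ} (hy : Continuous y) :
    ∫ s in (0 : ℝ)..1, ‖y s‖ ≤ L2norm y := by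
  have : IsProbabilityMeasure (volume.restrict (Set.Ioc (0 : ℝ) 1)) := ⟨by simp⟩
  have hsq : Continuous fun s => ∑ i, ‖y s i‖ ^ 2 := by fun_prop
  refine Real.le_sqrt_of_sq_le ?_
  calc (∫ s in (0 : ℝ)..1, ‖y s‖) ^ 2 ≤ ∫ s in (0 : ℝ)..1, ‖y s‖ ^ 2 := by
        simp only [intervalIntegral.integral_of_le zero_le_one]
        exact even_two.convexOn_pow.map_integral_le (continuousOn_pow 2) isClosed_univ (by simp)
          hy.norm.integrableOn_Ioc (hy.norm.pow 2).integrableOn_Ioc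
    _ ≤ ∫ s in (0 : ℝ)..1, ∑ i, ‖y s i‖ ^ 2 :=
        intervalIntegral.integral_mono_on zero_le_one ((hy.norm.pow 2).intervalIntegrable _ _)
          (hsq.intervalIntegrable _ _) fun s _ => norm_sq_le_sum_norm_sq (y s)

lemma norm_mulVec_le_sum_norm_mul_norm {ι κ R : Type*} [Fintype ι] [Fintype κ]
    [NonUnitalSeminormedRing R] (A : Matrix ι κ R) (v : κ → R) :
    ‖A.mulVec v‖ ≤ (∑ i, ∑ j, ‖A i j‖) * ‖v‖ := by
  refine (pi_norm_le_iff_of_nonneg (by positivity)).mpr fun i => ?_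
  calc ‖∑ j, A i j * v j‖ ≤ ∑ j, ‖A i j‖ * ‖v‖ :=
        norm_sum_le_of_le _ fun j _ =>
          (norm_mul_le _ _).trans (by gcongr; exact norm_le_pi_norm v j)
    _ = (∑ j, ‖A i j‖) * ‖v‖ := (sum_mul ..).symm
    _ ≤ (∑ i, ∑ j, ‖A i j‖) * ‖v‖ :=
        mul_le_mul_of_nonneg_right
          (single_le_sum (f := fun i => ∑ j, ‖A i j‖) (fun _ _ => by positivity) (mem_univ i))
          (norm_nonneg v)

end Norms

section Operator

variable {n m : ℕ} {P : ℕ → ℝ → Matrix (Fin m) (Fin m) ℂ}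

lemma CoeffCond.integrableOn (hP : CoeffCond n m P) {ν : ℕ} (hν : ν ∈ Icc 2 n) (i j : Fin m) :
    IntegrableOn (fun x => P ν x i j) (Set.Icc 0 1) := by
  obtain ⟨hν2, hνn⟩ := mem_Icc.mp hν
  obtain ⟨-, hdiff, hL2⟩ := hP ν hν2 hνn
  rcases Nat.eq_zero_or_pos (n - ν) with hzero | hpos
  · have hL2_ij := hL2 i j
    rw [hzero, iteratedDeriv_zero] at hL2_ij
    exact hL2_ij.integrable one_le_two
  · have hdiff_ij := hdiff i j 0 hpos
    rw [iteratedDeriv_zero] at hdiff_ij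
    exact hdiff_ij.continuous.continuousOn.integrableOn_Icc

lemma InDomRel.iteratedDeriv_eq_add_integral {t : ℂ} {z : ℝ} {y Ly : ℝ → Fin m → ℂ}
    (h : InDomRel n m P t z y Ly) {x : ℝ} (hx : x ∈ Set.Icc (0 : ℝ) 1) :
    iteratedDeriv (n - 1) y x =
      iteratedDeriv (n - 1) y 0 + ∫ s in (0 : ℝ)..x, (Ly s - pertExpr n m P z y s) := by
  obtain ⟨-, -, g, -, hint, hLy⟩ := h
  rw [hint x hx, intervalIntegral.integral_of_le hx.1, intervalIntegral.integral_of_le hx.1]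
  congr 1
  refine integral_congr_ae (ae_restrict_of_ae_restrict_of_subset ?_
    (hLy.mono fun s hs => (sub_eq_of_eq_add hs).symm))
  exact Set.Ioc_subset_Icc_self.trans (Set.Icc_subset_Icc_right hx.2)

/-- A pointwise bound for the coefficients of `l(y) - λ y` when `‖λ‖ ≤ M`, in which each matrix is
measured by the sum of the absolute values of its entries. -/
def coeffWeight (n m : ℕ) (P : ℕ → ℝ → Matrix (Fin m) (Fin m) ℂ) (M z x : ℝ) : ℝ :=
  M + |z| * ∑ ν ∈ Icc 2 n, ∑ i, ∑ j, ‖P ν x i j‖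

lemma integrableOn_coeffWeight
    (hP : ∀ ν ∈ Icc 2 n, ∀ i j, IntegrableOn (fun x => P ν x i j) (Set.Icc 0 1)) (M z : ℝ) :
    IntegrableOn (coeffWeight n m P M z) (Set.Icc 0 1) := by
  refine (integrable_const M).add (.const_mul ?_ |z|)
  exact integrable_finsetSum _ fun ν hν => integrable_finsetSum _ fun i _ =>
    integrable_finsetSum _ fun j _ => (hP ν hν i j).norm

lemma norm_smul_sub_pertExpr_le (hn : 2 ≤ n) {M : ℝ} {z : ℝ} {lam : ℂ} (hlam : ‖lam‖ ≤ M)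
    (y : ℝ → Fin m → ℂ) (x : ℝ) :
    ‖lam • y x - pertExpr n m P z y x‖ ≤
      coeffWeight n m P M z x * ∑ k ∈ range (n - 1), ‖iteratedDeriv k y x‖ := by
  set T := ∑ k ∈ range (n - 1), ‖iteratedDeriv k y x‖
  have hderiv : ∀ k < n - 1, ‖iteratedDeriv k y x‖ ≤ T := fun k hk =>
    single_le_sum (f := fun k => ‖iteratedDeriv k y x‖) (fun _ _ => norm_nonneg _)
      (mem_range.mpr hk)
  have hM : 0 ≤ M := (norm_nonneg lam).trans hlam
  have heigen : ‖lam • y x‖ ≤ M * T := by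
    rw [norm_smul]
    exact mul_le_mul hlam (hderiv 0 (by omega)) (norm_nonneg _) hM
  have hpert : ‖pertExpr n m P z y x‖ ≤ |z| * (∑ ν ∈ Icc 2 n, ∑ i, ∑ j, ‖P ν x i j‖) * T := by
    rw [pertExpr, norm_smul, Complex.norm_real, Real.norm_eq_abs, mul_assoc, sum_mul]
    gcongr
    refine norm_sum_le_of_le _ fun ν hν => (norm_mulVec_le_sum_norm_mul_norm _ _).trans ?_
    gcongr
    exact hderiv _ (by grind)
  rw [coeffWeight, add_mul]
  exact norm_sub_le_of_le heigen hpert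

end Operator

end SpectralExp

theorem statement14_general (n m : ℕ) (hn : 2 ≤ n) (P : ℕ → ℝ → Matrix (Fin m) (Fin m) ℂ)
    (hP : ∀ ν ∈ Icc 2 n, ∀ i j, IntegrableOn (fun x => P ν x i j) (Set.Icc 0 1)) (M z : ℝ) :
    ∃ c : ℝ, 0 < c ∧ ∀ (lam : ℂ) (y : ℝ → Fin m → ℂ), ‖lam‖ ≤ M → ContDiff ℝ (n - 1 : ℕ) y →
      (∀ x ∈ Set.Icc (0 : ℝ) 1, iteratedDeriv (n - 1) y x =
        iteratedDeriv (n - 1) y 0 + ∫ s in (0 : ℝ)..x, (lam • y s - pertExpr n m P z y s)) →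
      ∀ x ∈ Set.Icc (0 : ℝ) 1, vnorm (y x) ≤ c * L2norm y := by
  obtain ⟨C, hC, hbound⟩ := exists_norm_le_mul_integral_norm (E := Fin m → ℂ) zero_lt_one (n - 1)
    (integrableOn_coeffWeight hP M z)
  refine ⟨(√m + 1) * C, by positivity, fun lam y hlam hy hint x hx => ?_⟩
  have hpointwise := fun s => norm_smul_sub_pertExpr_le (P := P) (z := z) hn hlam y s
  calc vnorm (y x) ≤ (√m + 1) * ‖y x‖ :=
        (vnorm_le_sqrt_mul_norm _).trans (by gcongr; exact le_add_of_nonneg_right zero_le_one)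
    _ ≤ (√m + 1) * (C * ∫ s in (0 : ℝ)..1, ‖y s‖) := by
        gcongr
        exact hbound y _ hy hint (.of_forall hpointwise) x hx
    _ ≤ (√m + 1) * (C * L2norm y) := by
        gcongr
        exact integral_norm_le_L2norm hy.continuous
    _ = (√m + 1) * C * L2norm y := (mul_assoc ..).symm

/-- **Lemma 2.** For every M > 0 there exists c > 0 such that for every real
t ∈ [0,2π] and every L²-normalized eigenfunction Ψ of L_t whose eigenvalue λ satisfies
|λ| ≤ M, one has |Ψ(x)| ≤ c for all x ∈ [0,1]. -/
theorem statement14 (n m : ℕ) (hn : 2 ≤ n) (hm : 1 ≤ m)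
    (P : ℕ → ℝ → Matrix (Fin m) (Fin m) ℂ) (hP : CoeffCond n m P)
    (M : ℝ) (hM : 0 < M) :
    ∃ c : ℝ, 0 < c ∧
      ∀ t : ℝ, t ∈ Set.Icc 0 (2 * Real.pi) →
        ∀ (lam : ℂ) (Ψ : ℝ → Fin m → ℂ),
          IsEigenpair n m P (t : ℂ) 1 lam Ψ → L2norm Ψ = 1 → ‖lam‖ ≤ M →
            ∀ x ∈ Set.Icc (0:ℝ) 1, vnorm (Ψ x) ≤ c := by
  obtain ⟨c, hc, hbound⟩ := statement14_general n m hn P (fun _ => hP.integrableOn) M 1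
  refine ⟨c, hc, fun t _ lam Ψ hΨ hnorm hlam x hx => ?_⟩
  simpa only [hnorm, mul_one] using
    hbound lam Ψ hlam hΨ.2.1 (fun _ => hΨ.2.iteratedDeriv_eq_add_integral) x hx
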